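/- arXiv:0707.4160 — 3 statements merged into one kernel-verified Lean document; each statement's English description precedes it below -/
import Mathlib

section
/- Every simple finite vertex algebra is commutative: if $V$ is a vertex algebra that is a finitely generated $\mathbb{C}[T]$-module, has no ideals other than $0$ and $V$, then $a_{(n)}b = 0$ for all $a, b \in V$ and $n \geq 0$. -/
open scoped BigOperators

/-- A vertex algebra structure on a complex vector space `V`.
`P n a b` denotes the `n`-th product `a_{(n)} b`, `vac` is the vacuum `𝟙`,
and `D` is the infinitesimal translation operator `T`. -/
structure VertexAlgebra (V : Type*) [AddCommGroup V] [Module ℂ V] where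
  P : ℤ → V →ₗ[ℂ] V →ₗ[ℂ] V
  vac : V
  D : V →ₗ[ℂ] V
  field_ax : ∀ a b : V, ∃ N : ℕ, ∀ n : ℕ, N ≤ n → P n a b = 0
  vac_field : ∀ (n : ℤ) (a : V), P n vac a = if n = -1 then a else 0
  creation : ∀ a : V, P (-1) a vac = a
  creation_pos : ∀ (a : V) (n : ℤ), 0 ≤ n → P n a vac = 0
  D_vac : D vac = 0
  transl_inv : ∀ (n : ℤ) (a b : V), P n (D a) b = (-n : ℂ) • P (n - 1) a b
  D_deriv : ∀ (n : ℤ) (a b : V), D (P n a b) = P n (D a) b + P n a (D b)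
  skew : ∀ (n : ℤ) (a b : V),
    P n a b = ∑ᶠ j : ℕ, (((-1 : ℂ) ^ (n + j + 1)) / (j.factorial : ℂ)) • (D ^ j) (P (n + j) b a)
  borcherds : ∀ (m k : ℤ) (a b c : V),
    P m a (P k b c) - P k b (P m a c)
      = ∑ᶠ j : ℕ, ((Ring.choose m j : ℤ) : ℂ) • P (m + k - j) (P j a b) c

namespace VertexAlgebra

variable {V : Type*} [AddCommGroup V] [Module ℂ V] (W : VertexAlgebra V)

/-- An ideal of a vertex algebra: a `ℂ[T]`-submodule closed under all products with
arbitrary elements of `V`. -/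
def IsIdeal (I : Submodule ℂ V) : Prop :=
  (∀ x ∈ I, W.D x ∈ I) ∧ ∀ (a : V), ∀ b ∈ I, ∀ n : ℤ, W.P n a b ∈ I

/-- `A · B`: the span of all products `a_{(j)} b`, `a ∈ A`, `b ∈ B`, `j ∈ ℤ`. -/
def prodSpan (A B : Submodule ℂ V) : Submodule ℂ V :=
  Submodule.span ℂ {x | ∃ a ∈ A, ∃ b ∈ B, ∃ j : ℤ, x = W.P j a b}

/-- `[A, B]`: the span of all products `a_{(j)} b`, `a ∈ A`, `b ∈ B`, `j ≥ 0`. -/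
def posSpan (A B : Submodule ℂ V) : Submodule ℂ V :=
  Submodule.span ℂ {x | ∃ a ∈ A, ∃ b ∈ B, ∃ j : ℕ, x = W.P j a b}

/-- The sequence `I^1 = I`, `I^{n+1} = I^n · I^n` (indexed so that `nilSeq I n = I^{n+1}`). -/
def nilSeq (I : Submodule ℂ V) : ℕ → Submodule ℂ V
  | 0 => I
  | n + 1 => W.prodSpan (nilSeq I n) (nilSeq I n)

/-- A nil-ideal: an ideal whose sequence of iterated self-products vanishes. -/
def IsNilIdeal (I : Submodule ℂ V) : Prop :=
  W.IsIdeal I ∧ ∃ n : ℕ, W.nilSeq I n = ⊥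

/-- A vertex algebra is finite if it is a finitely generated `ℂ[T]`-module. -/
def IsFinite : Prop :=
  ∃ s : Finset V, ∀ v : V,
    v ∈ Submodule.span ℂ {x | ∃ g ∈ s, ∃ k : ℕ, x = (W.D ^ k) g}

/-- Abelian ideal. -/
def IsAbelianIdeal (I : Submodule ℂ V) : Prop :=
  W.IsIdeal I ∧ ∀ a ∈ I, ∀ b ∈ I, ∀ n : ℤ, W.P n a b = 0

end VertexAlgebra

namespace VertexAlgebra

open Finset

theorem exists_eps (N : ℕ) : ∃ ε : ℕ → ℤ, ε 0 ≠ 0 ∧ ∀ (m : ℤ) (j : ℕ), j < N →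
    ∑ s ∈ range (N + 1), ε s * Ring.choose (m - s) j = 0 := by
  refine ⟨fun k => (-1 : ℤ) ^ (N - k) * N.choose k, by simp, ?_⟩
  have key : ∀ (N j : ℕ) (t : ℤ), j < N →
      (fwdDiff (-1 : ℤ))^[N] (fun x : ℤ => (Ring.choose (x + t) j : ℤ)) = 0 := by
    intro N
    induction N with
    | zero => intro j t h; omega
    | succ N ih =>
      intro j t h
      rw [Function.iterate_succ_apply]
      rcases j with _ | j
      · have : fwdDiff (-1 : ℤ) (fun x : ℤ => (Ring.choose (x + t) 0 : ℤ)) = (0 : ℤ) • (fun _ => (0:ℤ)) := by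
          ext x; simp [fwdDiff]
        rw [this, fwdDiff_iter_const_smul, zero_smul]
      · have : fwdDiff (-1 : ℤ) (fun x : ℤ => (Ring.choose (x + t) (j + 1) : ℤ))
            = (-1 : ℤ) • (fun x : ℤ => (Ring.choose (x + (t - 1)) j : ℤ)) := by
          ext x
          have h1 := Ring.choose_succ_succ (x + (t - 1)) j
          rw [show x + (t - 1) + 1 = x + t by ring] at h1
          simp only [fwdDiff, Pi.smul_apply, smul_eq_mul]
          rw [show x + -1 + t = x + (t - 1) by ring, h1]
          ring
        rw [this, fwdDiff_iter_const_smul, ih j _ (by omega), smul_zero]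
  intro m j hj
  have h := congrFun (key N j 0 hj) m
  rw [fwdDiff_iter_eq_sum_shift] at h
  simpa [sub_eq_add_neg] using h

variable {V : Type*} [AddCommGroup V] [Module ℂ V] (W : VertexAlgebra V)

/-- Commutator formula as a finite sum. -/
theorem comm {a b : V} {N : ℕ} (hN : ∀ n : ℕ, N ≤ n → W.P n a b = 0) (m k : ℤ) (c : V) :
    W.P m a (W.P k b c) = W.P k b (W.P m a c)
      + ∑ j ∈ range N, ((Ring.choose m j : ℤ) : ℂ) • W.P (m + k - j) (W.P j a b) c := by
  rw [← sub_eq_iff_eq_add', W.borcherds]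
  apply finsum_eq_sum_of_support_subset
  intro j hj
  simp only [coe_range, Set.mem_Iio]
  by_contra h
  apply hj
  simp [hN j (by omega)]

/-- Locality. -/
theorem locality {a b : V} {N : ℕ} (hN : ∀ n : ℕ, N ≤ n → W.P n a b = 0) {N' : ℕ} (hNN : N ≤ N')
    {ε : ℕ → ℤ} (hε : ∀ (m : ℤ) (j : ℕ), j < N' →
      ∑ s ∈ range (N' + 1), ε s * Ring.choose (m - s) j = 0) (m k : ℤ) (c : V) :
    ∑ s ∈ range (N' + 1), (ε s : ℂ) • W.P (m - s) a (W.P (k + s) b c)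
      = ∑ s ∈ range (N' + 1), (ε s : ℂ) • W.P (k + s) b (W.P (m - s) a c) := by
  simp_rw [W.comm hN, smul_add, sum_add_distrib]
  rw [add_eq_left]
  simp_rw [smul_sum]
  rw [sum_comm]
  apply sum_eq_zero
  intro j hj
  have hj' : j < N := by simpa using hj
  have : ∀ s ∈ range (N' + 1), (ε s : ℂ) • ((Ring.choose (m - s) j : ℤ) : ℂ) •
      W.P (m - s + (k + s) - j) (W.P j a b) c
      = ((ε s * Ring.choose (m - s) j : ℤ) : ℂ) • W.P (m + k - j) (W.P j a b) c := by
    intro s _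
    rw [smul_smul]
    push_cast
    rw [show m - s + (k + s) - j = m + k - j by ring]
  rw [sum_congr rfl this, ← sum_smul, ← Int.cast_sum, hε m j (by omega)]
  simp

theorem mode_D_pow (g c : V) (F : Submodule ℂ V) (hF : ∀ l : ℕ, W.P l g c ∈ F) (k : ℕ) :
    ∀ M : ℕ, W.P M ((W.D ^ k) g) c ∈ F := by
  induction k with
  | zero => simpa using hF
  | succ k ih =>
    intro M
    rw [pow_succ', Module.End.mul_apply, W.transl_inv]
    rcases M with _ | M
    · simp
    · apply F.smul_mem
      have := ih M
      rwa [show ((M + 1 : ℕ) : ℤ) - 1 = M by push_cast; ring]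

/-- Nonnegative modes of everything applied to `c` lie in a finite-dimensional space. -/
theorem exists_fin_space (hfin : W.IsFinite) (c : V) :
    ∃ F : Submodule ℂ V, FiniteDimensional ℂ F ∧ ∀ (x : V) (M : ℕ), W.P M x c ∈ F := by
  obtain ⟨s, hs⟩ := hfin
  choose N hN using fun g => W.field_ax g c
  refine ⟨⨆ g : s, Submodule.span ℂ (Set.image (fun l : ℕ => W.P l g c) (Finset.range (N g) : Set ℕ)), ?_, ?_⟩
  · have : ∀ g : s, FiniteDimensional ℂ
        (Submodule.span ℂ (Set.image (fun l : ℕ => W.P l g c) (Finset.range (N g) : Set ℕ))) := fun g =>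
      FiniteDimensional.span_of_finite ℂ (Set.Finite.image _ (Finset.finite_toSet _))
    exact Submodule.finiteDimensional_iSup _
  · intro x M
    have := hs x
    induction this using Submodule.span_induction with
    | mem x hx =>
      obtain ⟨g, hg, k, rfl⟩ := hx
      apply W.mode_D_pow
      intro l
      apply Submodule.mem_iSup_of_mem (⟨g, hg⟩ : s)
      by_cases hl : l < N g
      · exact Submodule.subset_span ⟨l, by simpa using hl, rfl⟩
      · rw [hN g l (by omega)]; exact Submodule.zero_mem _
    | zero => simp
    | add x y _ _ hx hy => simpa using Submodule.add_mem _ hx hy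
    | smul t x _ hx => simpa using Submodule.smul_mem _ t hx

/-- The leading coefficient of `c` acting on `x`. -/
theorem leading {c x : V} {M : ℕ} (h : ∀ m : ℕ, M < m → W.P m c x = 0)
    {F : Submodule ℂ V} (hF : ∀ (x : V) (M : ℕ), W.P M x c ∈ F) : W.P M c x ∈ F := by
  have h2 : ∀ m : ℕ, M < m → W.P m x c = 0 := by
    intro m hm
    rw [W.skew]
    rw [finsum_eq_zero_of_forall_eq_zero]
    intro j
    have := h (m + j) (by omega)
    push_cast at this
    simp [this]
  rw [W.skew, finsum_eq_single _ 0]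
  · simpa using F.smul_mem _ (hF x M)
  · intro j hj
    have := h2 (M + j) (by omega)
    push_cast at this
    simp [this]

/-- Vectors on which every field takes values in a finite-dimensional space. -/
def finVec : Submodule ℂ V where
  carrier := {u | ∀ b : V, ∃ F : Submodule ℂ V, FiniteDimensional ℂ F ∧ ∀ k : ℤ, W.P k b u ∈ F}
  zero_mem' := fun b => ⟨⊥, inferInstance, by simp⟩
  add_mem' := by
    intro x y hx hy b
    obtain ⟨F, _, hF⟩ := hx b
    obtain ⟨G, _, hG⟩ := hy b
    refine ⟨F ⊔ G, inferInstance, fun k => ?_⟩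
    rw [map_add]
    exact Submodule.add_mem_sup (hF k) (hG k)
  smul_mem' := by
    intro t x hx b
    obtain ⟨F, hfd, hF⟩ := hx b
    exact ⟨F, hfd, fun k => by rw [map_smul]; exact F.smul_mem _ (hF k)⟩

theorem finVec_ideal : W.IsIdeal W.finVec := by
  constructor
  · intro u hu b
    obtain ⟨F, _, hF⟩ := hu b
    refine ⟨F.map W.D ⊔ F, inferInstance, fun k => ?_⟩
    have h := W.D_deriv k b u
    rw [W.transl_inv] at h
    rw [← sub_eq_iff_eq_add'.mpr h, sub_eq_add_neg]
    exact Submodule.add_mem_sup (Submodule.mem_map_of_mem (hF k))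
      (F.neg_mem (F.smul_mem _ (hF _)))
  · intro a u hu n b
    obtain ⟨N, hN⟩ := W.field_ax b a
    obtain ⟨F, _, hF⟩ := hu b
    choose G hG1 hG using hu
    refine ⟨F.map (W.P n a) ⊔ ⨆ j : Fin N, G (W.P (j : ℕ) b a), inferInstance, fun k => ?_⟩
    rw [W.comm hN]
    refine Submodule.add_mem_sup (Submodule.mem_map_of_mem (hF k)) ?_
    refine Submodule.sum_mem _ fun j hj => Submodule.smul_mem _ _ ?_
    exact Submodule.mem_iSup_of_mem (⟨j, by simpa using hj⟩ : Fin N) (hG _ _)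

/-- The main computation. -/
theorem main_mem (hfin : W.IsFinite) {c a : V} {p : ℕ} (hp : ∀ l : ℕ, p < l → W.P l c a = 0) :
    W.P p c a ∈ W.finVec := by
  intro b
  set u := W.P p c a with hu
  obtain ⟨F, hFd, hF⟩ := W.exists_fin_space hfin c
  obtain ⟨B, hB⟩ := W.field_ax c b
  choose L hL using fun l : ℕ => W.field_ax (W.P l c b) a
  obtain ⟨N, hN⟩ : ∃ N : ℕ, ∀ l ∈ range B, L l ≤ N :=
    ⟨(range B).sup L, fun l hl => Finset.le_sup hl⟩
  obtain ⟨ε, hε0, hε⟩ := exists_eps N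
  have hpa : ∀ l : ℕ, p + 1 ≤ l → W.P l c a = 0 := fun l hl => hp l (by omega)
  have key : ∀ i : ℕ, W.P ((N : ℤ) - 1 - i) b u ∈ F := by
    intro i
    obtain ⟨n, hn⟩ : ∃ n : ℕ, n = i + B + 1 := ⟨_, rfl⟩
    set x : V := ∑ s ∈ range (N + 1), (ε s : ℂ) •
      W.P ((N : ℤ) - 1 - i - s) b (W.P (-(n : ℤ) - 1 + s) a W.vac) with hx
    have hcx : ∀ m : ℕ, n ≤ m → W.P m c x = ∑ s ∈ range (N + 1), (ε s : ℂ) •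
        W.P ((N : ℤ) - 1 - i - s) b (W.P m c (W.P (-(n : ℤ) - 1 + s) a W.vac)) := by
      intro m hm
      rw [hx, map_sum]
      simp_rw [map_smul, W.comm hB, smul_add, sum_add_distrib]
      rw [add_eq_left]
      simp_rw [smul_sum]
      rw [sum_comm]
      apply sum_eq_zero
      intro l hl
      have hlB : l < B := by simpa using hl
      simp_rw [smul_comm _ ((Ring.choose (m : ℤ) l : ℤ) : ℂ)]
      rw [← smul_sum]
      have e : ∀ s : ℕ, (m : ℤ) + ((N : ℤ) - 1 - i - s) - l = ((m : ℤ) + N - 1 - i - l) - s := by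
        intro s; ring
      simp_rw [e]
      rw [W.locality (hL l) (hN l hl) hε]
      rw [sum_eq_zero, smul_zero]
      intro s hs
      have : s < N + 1 := by simpa using hs
      rw [W.creation_pos _ _ (by omega)]
      simp
    have hca : ∀ (m s : ℕ), n + p ≤ m → W.P m c (W.P (-(n : ℤ) - 1 + s) a W.vac)
        = if m = n + p ∧ s = 0 then ((Ring.choose (m : ℤ) p : ℤ) : ℂ) • u else 0 := by
      intro m s hm
      rw [W.comm hpa, W.creation_pos c m (by omega), map_zero, zero_add, sum_range_succ,
        sum_eq_zero, zero_add]
      · split_ifs with h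
        · obtain ⟨rfl, rfl⟩ := h
          rw [show ((n + p : ℕ) : ℤ) + (-(n : ℤ) - 1 + (0 : ℕ)) - p = -1 by push_cast; ring,
            W.creation]
        · rw [W.creation_pos _ _ (by omega), smul_zero]
      · intro l hl
        have : l < p := by simpa using hl
        rw [W.creation_pos _ _ (by omega), smul_zero]
    have htop : W.P ((n + p : ℕ) : ℤ) c x ∈ F := by
      apply W.leading _ hF
      intro m hm
      rw [hcx m (by omega)]
      apply sum_eq_zero
      intro s _
      rw [hca m s (by omega), if_neg (by omega)]
      simp
    rw [hcx _ (by omega), sum_eq_single 0] at htop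
    · rw [hca _ _ le_rfl, if_pos ⟨rfl, rfl⟩, map_smul, smul_smul] at htop
      rw [F.smul_mem_iff] at htop
      · simpa using htop
      · apply mul_ne_zero
        · exact_mod_cast hε0
        · rw [Ring.choose_natCast]
          have : 0 < (n + p).choose p := Nat.choose_pos (by omega)
          exact_mod_cast this.ne'
    · intro s _ hs
      rw [hca _ _ le_rfl, if_neg (by tauto)]
      simp
    · simp
  obtain ⟨K, hK⟩ := W.field_ax b u
  refine ⟨F ⊔ Submodule.span ℂ (Set.image (fun l : ℕ => W.P l b u) (Finset.range K : Set ℕ)), ?_, ?_⟩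
  · have := FiniteDimensional.span_of_finite ℂ
      (Set.Finite.image (fun l : ℕ => W.P l b u) (Finset.finite_toSet (range K)))
    infer_instance
  · intro k
    by_cases h : k ≤ (N : ℤ) - 1
    · apply Submodule.mem_sup_left
      have := key ((N : ℤ) - 1 - k).toNat
      rwa [show (N : ℤ) - 1 - (((N : ℤ) - 1 - k).toNat : ℤ) = k by omega] at this
    · apply Submodule.mem_sup_right
      obtain ⟨l, rfl⟩ : ∃ l : ℕ, k = l := ⟨k.toNat, by omega⟩
      by_cases hl : l < K
      · exact Submodule.subset_span ⟨l, by simpa using hl, rfl⟩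
      · rw [hK l (by omega)]; exact Submodule.zero_mem _

theorem D_pow_mem {a : V} {F : Submodule ℂ V} (hF : ∀ k : ℤ, W.P k a W.vac ∈ F) (k : ℕ) :
    (W.D ^ k) a ∈ F := by
  have h : ∀ k : ℕ, (W.D ^ k) a = (k.factorial : ℂ) • W.P (-(k : ℤ) - 1) a W.vac := by
    intro k
    induction k with
    | zero => simp [W.creation]
    | succ k ih =>
      rw [pow_succ', Module.End.mul_apply, ih, map_smul, W.D_deriv, W.D_vac, map_zero, add_zero,
        W.transl_inv, smul_smul, Nat.factorial_succ]
      rw [show -(k : ℤ) - 1 - 1 = -((k + 1 : ℕ) : ℤ) - 1 by push_cast; ring]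
      congr 1
      push_cast
      ring
  rw [h]
  exact F.smul_mem _ (hF _)

theorem mode_eq_zero (b : V) (k : ℕ) : ∀ (a : V) (m : ℕ),
    W.P (m + k : ℕ) ((W.D ^ k) a) b = 0 → W.P m a b = 0 := by
  induction k with
  | zero => intro a m h; simpa using h
  | succ k ih =>
    intro a m h
    rw [pow_succ', Module.End.mul_apply, W.transl_inv, smul_eq_zero] at h
    apply ih
    rcases h with h | h
    · exfalso
      rw [neg_eq_zero] at h
      have : ((m + (k + 1) : ℕ) : ℤ) = 0 := by exact_mod_cast h
      omega
    · rwa [show ((m + (k + 1) : ℕ) : ℤ) - 1 = (m + k : ℕ) by push_cast; ring] at h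

theorem uniform_bound (F : Submodule ℂ V) [FiniteDimensional ℂ F] (b : V) :
    ∃ K : ℕ, ∀ x ∈ F, ∀ m : ℕ, K ≤ m → W.P m x b = 0 := by
  obtain ⟨S, hS⟩ : F.FG := Module.Finite.iff_fg.mp inferInstance
  choose N hN using fun g => W.field_ax g b
  refine ⟨S.sup N, fun x hx m hm => ?_⟩
  rw [← hS] at hx
  induction hx using Submodule.span_induction with
  | mem x hx => exact hN x m ((Finset.le_sup (f := N) hx).trans hm)
  | zero => simp
  | add x y _ _ hx hy => simp [hx, hy]
  | smul t x _ hx => simp [hx]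

end VertexAlgebra

open VertexAlgebra in
/-- every simple finite vertex algebra is commutative. -/
theorem simple_finite_is_commutative {V : Type*} [AddCommGroup V] [Module ℂ V]
    (W : VertexAlgebra V) (hfin : W.IsFinite)
    (hsimple : ∀ I : Submodule ℂ V, W.IsIdeal I → I = ⊥ ∨ I = ⊤) :
    ∀ (a b : V) (n : ℕ), W.P n a b = 0 := by
  rcases hsimple _ W.finVec_ideal with h | h
  · intro c a
    obtain ⟨N, hN⟩ := W.field_ax c a
    have step : ∀ k : ℕ, k ≤ N → ∀ n : ℕ, N - k ≤ n → W.P n c a = 0 := by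
      intro k
      induction k with
      | zero => intro _ n hn; exact hN n (by omega)
      | succ k ih =>
        intro hk n hn
        by_cases hn2 : N - k ≤ n
        · exact ih (by omega) n hn2
        · have := W.main_mem hfin (c := c) (a := a) (p := n)
            (fun l hl => ih (by omega) l (by omega))
          rw [h] at this
          simpa using this
    intro n
    exact step N le_rfl n (by omega)
  · intro a b n
    have hv : W.vac ∈ W.finVec := by rw [h]; trivial
    obtain ⟨F, _, hF⟩ := hv a
    obtain ⟨K, hK⟩ := W.uniform_bound F b
    exact W.mode_eq_zero b K a n (hK _ (W.D_pow_mem hF K) _ (by omega))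
end

section
/- Let $V$ be a vertex algebra, $S$ a Lie conformal subalgebra of $V$, and $\phi, \psi$ two weights for the adjoint action of $S$ on $V$. Then $V^\phi \cdot V^\psi \subset V^{\phi+\psi}$, i.e., all products $v_{(k)}w$ with $v \in V^\phi$, $w \in V^\psi$, $k \in \mathbb{Z}$ lie in the generalized weight space $V^{\phi+\psi}$. -/
open scoped BigOperators

namespace VertexAlgebra

variable {V : Type*} [AddCommGroup V] [Module ℂ V]

/-- A Lie conformal subalgebra of (the Lie conformal algebra underlying) a vertex algebra:
a `ℂ[T]`-submodule closed under all non-negative products. -/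
def IsConfSubalgebra (W : VertexAlgebra V) (S : Submodule ℂ V) : Prop :=
  (∀ x ∈ S, W.D x ∈ S) ∧ ∀ a ∈ S, ∀ b ∈ S, ∀ n : ℕ, W.P n a b ∈ S

/-- `ψ` (given by its coefficients `ψ s h` of `λ^h/h!`) is a weight for the adjoint action
of `S` on `V`: there is a non-zero weight vector. -/
def IsWeight (W : VertexAlgebra V) (S : Submodule ℂ V) (ψ : V → ℕ → ℂ) : Prop :=
  ∃ v : V, v ≠ 0 ∧ ∀ s ∈ S, ∀ h : ℕ, W.P h s v = ψ s h • v

/-- The ascending chain `V^ψ_0 = 0`, `V^ψ_{i+1} = {v | s_λ v - ψ_s(λ) v ∈ V^ψ_i[λ]}`. -/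
def genWtSeq (W : VertexAlgebra V) (S : Submodule ℂ V) (ψ : V → ℕ → ℂ) : ℕ → Set V
  | 0 => {0}
  | i + 1 => {v | ∀ s ∈ S, ∀ h : ℕ, W.P h s v - ψ s h • v ∈ genWtSeq W S ψ i}

/-- The generalized weight space `V^ψ = ⋃ᵢ V^ψ_i`. -/
def genWt (W : VertexAlgebra V) (S : Submodule ℂ V) (ψ : V → ℕ → ℂ) : Set V :=
  {v | ∃ i : ℕ, v ∈ genWtSeq W S ψ i}

end VertexAlgebra

namespace VertexAlgebra

theorem genWtSeq_zero_mem {V : Type*} [AddCommGroup V] [Module ℂ V] (W : VertexAlgebra V)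
    (S : Submodule ℂ V) (ψ : V → ℕ → ℂ) (n : ℕ) : (0 : V) ∈ W.genWtSeq S ψ n := by
  induction n with
  | zero => simp [genWtSeq]
  | succ n ih => intro s _ h; simpa using ih

theorem genWtSeq_add_mem {V : Type*} [AddCommGroup V] [Module ℂ V] (W : VertexAlgebra V)
    (S : Submodule ℂ V) (ψ : V → ℕ → ℂ) (n : ℕ) : ∀ a b : V, a ∈ W.genWtSeq S ψ n →
    b ∈ W.genWtSeq S ψ n → a + b ∈ W.genWtSeq S ψ n := by
  induction n with
  | zero => intro a b ha hb; simp_all [genWtSeq]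
  | succ n ih =>
    intro a b ha hb s hs h
    have := ih _ _ (ha s hs h) (hb s hs h)
    convert this using 1
    rw [map_add, smul_add]; abel

theorem genWtSeq_smul_mem {V : Type*} [AddCommGroup V] [Module ℂ V] (W : VertexAlgebra V)
    (S : Submodule ℂ V) (ψ : V → ℕ → ℂ) (n : ℕ) : ∀ (c : ℂ) (a : V), a ∈ W.genWtSeq S ψ n →
    c • a ∈ W.genWtSeq S ψ n := by
  induction n with
  | zero => intro c a ha; simp_all [genWtSeq]
  | succ n ih =>
    intro c a ha s hs h
    have := ih c _ (ha s hs h)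
    convert this using 1
    rw [map_smul, smul_sub, smul_comm]

/-- The chain `genWtSeq` as submodules. -/
def wtSub {V : Type*} [AddCommGroup V] [Module ℂ V] (W : VertexAlgebra V)
    (S : Submodule ℂ V) (ψ : V → ℕ → ℂ) (n : ℕ) : Submodule ℂ V where
  carrier := W.genWtSeq S ψ n
  zero_mem' := genWtSeq_zero_mem W S ψ n
  add_mem' := fun {a b} ha hb => genWtSeq_add_mem W S ψ n a b ha hb
  smul_mem' := fun c a ha => genWtSeq_smul_mem W S ψ n c a ha

/-- The reduced action of `s_(m)` on formal distributions `f` (`f k` is the coefficient of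
`z^(-k-1)`): `s_(m) f - ψ f - ∑ binom(m,j) φ_j z^(m-j) f`. -/
def redAct {V : Type*} [AddCommGroup V] [Module ℂ V] (W : VertexAlgebra V)
    (φ ψ : V → ℕ → ℂ) (s : V) (m : ℕ) : (ℤ → V) →ₗ[ℂ] (ℤ → V) where
  toFun f k := W.P m s (f k) - ψ s m • f k
    - ∑ j ∈ Finset.range (m + 1), ((m.choose j : ℂ) * φ s j) • f (m + k - j)
  map_add' f g := by
    funext k
    simp only [Pi.add_apply, map_add, smul_add, Finset.sum_add_distrib]
    abel
  map_smul' c f := by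
    funext k
    simp only [Pi.smul_apply, map_smul, RingHom.id_apply, smul_sub, Finset.smul_sum]
    simp only [smul_comm c]

/-- Annihilator filtration for the reduced action. -/
def redFil {V : Type*} [AddCommGroup V] [Module ℂ V] (W : VertexAlgebra V)
    (S : Submodule ℂ V) (φ ψ : V → ℕ → ℂ) : ℕ → Submodule ℂ (ℤ → V)
  | 0 => ⊥
  | n + 1 => ⨅ s : S, ⨅ m : ℕ, (redFil W S φ ψ n).comap (redAct W φ ψ s m)

theorem mem_redFil_succ {V : Type*} [AddCommGroup V] [Module ℂ V] (W : VertexAlgebra V)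
    (S : Submodule ℂ V) (φ ψ : V → ℕ → ℂ) (n : ℕ) (f : ℤ → V) :
    f ∈ redFil W S φ ψ (n + 1) ↔
      ∀ s ∈ S, ∀ m : ℕ, redAct W φ ψ s m f ∈ redFil W S φ ψ n := by
  simp [redFil, Submodule.mem_iInf]

theorem redFil_shift {V : Type*} [AddCommGroup V] [Module ℂ V] (W : VertexAlgebra V)
    (S : Submodule ℂ V) (φ ψ : V → ℕ → ℂ) (n : ℕ) : ∀ (f : ℤ → V) (d : ℤ),
    f ∈ redFil W S φ ψ n → (fun k => f (k + d)) ∈ redFil W S φ ψ n := by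
  induction n with
  | zero =>
    intro f d hf
    have hf : f = 0 := by simpa [redFil] using hf
    subst hf
    exact Submodule.zero_mem _
  | succ n ih =>
    intro f d hf
    rw [mem_redFil_succ] at hf ⊢
    intro s hs m
    convert ih _ d (hf s hs m) using 1
    funext k
    simp only [redAct, LinearMap.coe_mk, AddHom.coe_mk]
    congr 1
    refine Finset.sum_congr rfl fun j _ => ?_
    congr 2
    ring

theorem comm_formula {V : Type*} [AddCommGroup V] [Module ℂ V] (W : VertexAlgebra V)
    (m : ℕ) (k : ℤ) (a b c : V) :
    W.P m a (W.P k b c) = W.P k b (W.P m a c)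
      + ∑ j ∈ Finset.range (m + 1), (m.choose j : ℂ) • W.P (m + k - j) (W.P j a b) c := by
  rw [← sub_eq_iff_eq_add', W.borcherds]
  rw [finsum_eq_sum_of_support_subset (s := Finset.range (m + 1))]
  · simp [Ring.choose_natCast]
  · intro j hj
    by_contra hjm
    apply hj
    have : m < j := by simpa using hjm
    simp [Ring.choose_natCast, Nat.choose_eq_zero_of_lt this]

theorem redAct_prod {V : Type*} [AddCommGroup V] [Module ℂ V] (W : VertexAlgebra V)
    (φ ψ : V → ℕ → ℂ) (s : V) (m : ℕ) (v w : V) :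
    redAct W φ ψ s m (fun k => W.P k v w) =
      (fun k => W.P k v (W.P m s w - ψ s m • w)) +
      ∑ j ∈ Finset.range (m + 1), (m.choose j : ℂ) •
        (fun k => W.P (k + ((m : ℤ) - j)) (W.P j s v - φ s j • v) w) := by
  funext k
  simp only [redAct, LinearMap.coe_mk, AddHom.coe_mk, Pi.add_apply, Finset.sum_apply,
    Pi.smul_apply]
  rw [comm_formula]
  have e : ∀ j : ℕ, k + ((m : ℤ) - j) = m + k - j := fun j => by ring
  simp only [e, map_sub, map_smul, LinearMap.sub_apply, LinearMap.smul_apply, smul_sub,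
    Finset.sum_sub_distrib, mul_smul]
  abel

theorem prod_mem_redFil {V : Type*} [AddCommGroup V] [Module ℂ V] (W : VertexAlgebra V)
    (S : Submodule ℂ V) (φ ψ : V → ℕ → ℂ) (n : ℕ) : ∀ (i j : ℕ), i + j = n → ∀ v w : V,
    v ∈ W.genWtSeq S φ i → w ∈ W.genWtSeq S ψ j →
    (fun k => W.P k v w) ∈ redFil W S φ ψ n := by
  induction n with
  | zero =>
    intro i j hij v w hv hw
    obtain rfl : i = 0 := by omega
    have hv : v = 0 := hv
    subst hv
    have : (fun k => W.P k (0 : V) w) = 0 := by funext k; simp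
    rw [this]; exact Submodule.zero_mem _
  | succ n ih =>
    intro i j hij v w hv hw
    rcases i with _ | i
    · have hv : v = 0 := hv
      subst hv
      have : (fun k => W.P k (0 : V) w) = 0 := by funext k; simp
      rw [this]; exact Submodule.zero_mem _
    rcases j with _ | j
    · have hw : w = 0 := hw
      subst hw
      have : (fun k => W.P k v (0 : V)) = 0 := by funext k; simp
      rw [this]; exact Submodule.zero_mem _
    rw [mem_redFil_succ]
    intro s hs m
    rw [redAct_prod]
    refine Submodule.add_mem _ (ih (i + 1) j (by omega) v _ hv (hw s hs m)) ?_
    refine Submodule.sum_mem _ fun l _ => Submodule.smul_mem _ _ ?_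
    exact redFil_shift W S φ ψ n _ _ (ih i (j + 1) (by omega) _ w (hv s hs l) hw)

theorem coeff_mem {V : Type*} [AddCommGroup V] [Module ℂ V] (W : VertexAlgebra V)
    (S : Submodule ℂ V) (φ ψ : V → ℕ → ℂ) (N : ℤ) (M : ℕ) : ∀ (n : ℕ) (f : ℤ → V) (k : ℤ),
    f ∈ redFil W S φ ψ n → (∀ l, N ≤ l → f l = 0) → (n : ℤ) + N - k ≤ M →
    f k ∈ wtSub W S (fun s h => φ s h + ψ s h) M := by
  induction M with
  | zero =>
    intro n f k hf h0 hk
    rcases n with _ | n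
    · have hf : f = 0 := by simpa [redFil] using hf
      subst hf
      exact Submodule.zero_mem _
    · rw [h0 k (by push_cast at hk; omega)]
      exact Submodule.zero_mem _
  | succ M ih =>
    intro n f k hf h0 hk
    rcases n with _ | n
    · have hf : f = 0 := by simpa [redFil] using hf
      subst hf
      exact Submodule.zero_mem _
    intro s hs m
    rw [mem_redFil_succ] at hf
    have h1 := ih n _ k (hf s hs m) (by
      intro l hl
      simp only [redAct, LinearMap.coe_mk, AddHom.coe_mk]
      rw [h0 l hl, Finset.sum_eq_zero]
      · simp
      · intro j hj
        have : j < m + 1 := Finset.mem_range.1 hj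
        rw [h0 _ (by omega), smul_zero]) (by push_cast at hk ⊢; omega)
    have h2 : ∑ j ∈ Finset.range m, ((m.choose j : ℂ) * φ s j) • f (m + k - j) ∈
        wtSub W S (fun s h => φ s h + ψ s h) M := by
      refine Submodule.sum_mem _ fun j hj => Submodule.smul_mem _ _ ?_
      have : j < m := Finset.mem_range.1 hj
      exact ih (n + 1) f _ ((mem_redFil_succ W S φ ψ n f).2 hf) h0
        (by push_cast at hk ⊢; omega)
    have h3 := Submodule.add_mem _ h1 h2
    change _ ∈ wtSub W S (fun s h => φ s h + ψ s h) M
    convert h3 using 1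
    simp only [redAct, LinearMap.coe_mk, AddHom.coe_mk, Finset.sum_range_succ,
      Nat.choose_self, Nat.cast_one, one_mul, add_smul, add_sub_cancel_left]
    abel

end VertexAlgebra

open VertexAlgebra in
/-- products of generalized weight vectors of weights `φ` and `ψ` lie in the
generalized weight space of weight `φ + ψ`. -/
theorem product_of_generalized_weight_spaces {V : Type*} [AddCommGroup V] [Module ℂ V]
    (W : VertexAlgebra V) (S : Submodule ℂ V) (hS : W.IsConfSubalgebra S)
    (φ ψ : V → ℕ → ℂ) (hφ : W.IsWeight S φ) (hψ : W.IsWeight S ψ) :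
    ∀ v ∈ W.genWt S φ, ∀ w ∈ W.genWt S ψ, ∀ k : ℤ,
      W.P k v w ∈ W.genWt S (fun s h => φ s h + ψ s h) := by
  rintro v ⟨i, hv⟩ w ⟨j, hw⟩ k
  obtain ⟨N, hN⟩ := W.field_ax v w
  refine ⟨((i + j : ℕ) + (N : ℤ) - k).toNat, ?_⟩
  refine coeff_mem W S φ ψ N _ (i + j) (fun k => W.P k v w) k
    (prod_mem_redFil W S φ ψ _ i j rfl v w hv hw) ?_ (Int.self_le_toNat _)
  intro l hl
  lift l to ℕ using by omega
  exact hN l (by exact_mod_cast hl)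
end

section
/- Let $V$ be a finite vertex algebra, $S$ a Lie conformal subalgebra of $V$, and $\psi$ a non-zero weight for the adjoint action of $S$ on $V$. Then the generalized weight space $V^\psi$ is an ideal of the vertex algebra $V$ satisfying $V^\psi \cdot V^\psi = 0$ (an abelian vertex ideal). -/
open scoped BigOperators

namespace VertexAlgebra

section aux

variable {V : Type*} [AddCommGroup V] [Module ℂ V]

theorem aux_zero_mem (W : VertexAlgebra V) (S : Submodule ℂ V) (ψ : V → ℕ → ℂ) (i : ℕ) :
    (0 : V) ∈ genWtSeq W S ψ i := by
  induction i with
  | zero => exact rfl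
  | succ i ih =>
    intro s _ h
    simpa using ih

theorem aux_add_mem (W : VertexAlgebra V) (S : Submodule ℂ V) (ψ : V → ℕ → ℂ) (i : ℕ) :
    ∀ x ∈ genWtSeq W S ψ i, ∀ y ∈ genWtSeq W S ψ i, x + y ∈ genWtSeq W S ψ i := by
  induction i with
  | zero =>
    intro x hx y hy
    have hx' : x = 0 := hx
    have hy' : y = 0 := hy
    subst hx' hy'
    exact add_zero (0 : V)
  | succ i ih =>
    intro x hx y hy s hs h
    have := ih _ (hx s hs h) _ (hy s hs h)
    have e : W.P h s (x + y) - ψ s h • (x + y)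
        = (W.P h s x - ψ s h • x) + (W.P h s y - ψ s h • y) := by
      rw [map_add, smul_add]; abel
    rw [e]; exact this

theorem aux_smul_mem (W : VertexAlgebra V) (S : Submodule ℂ V) (ψ : V → ℕ → ℂ) (i : ℕ) :
    ∀ (c : ℂ), ∀ x ∈ genWtSeq W S ψ i, c • x ∈ genWtSeq W S ψ i := by
  induction i with
  | zero =>
    intro c x hx
    have hx' : x = 0 := hx
    subst hx'
    exact smul_zero c
  | succ i ih =>
    intro c x hx s hs h
    have := ih c _ (hx s hs h)
    have e : W.P h s (c • x) - ψ s h • (c • x) = c • (W.P h s x - ψ s h • x) := by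
      rw [map_smul, smul_sub, smul_comm]
    rw [e]; exact this

theorem aux_mono_succ (W : VertexAlgebra V) (S : Submodule ℂ V) (ψ : V → ℕ → ℂ) (i : ℕ) :
    genWtSeq W S ψ i ⊆ genWtSeq W S ψ (i + 1) := by
  induction i with
  | zero =>
    intro x hx
    have hx' : x = 0 := hx
    subst hx'
    exact aux_zero_mem W S ψ 1
  | succ i ih =>
    intro x hx s hs h
    exact ih (hx s hs h)

theorem aux_mono (W : VertexAlgebra V) (S : Submodule ℂ V) (ψ : V → ℕ → ℂ) :
    Monotone (genWtSeq W S ψ) :=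
  monotone_nat_of_le_succ (aux_mono_succ W S ψ)

theorem aux_D_mem (W : VertexAlgebra V) (S : Submodule ℂ V) (ψ : V → ℕ → ℂ) (i : ℕ) :
    ∀ x ∈ genWtSeq W S ψ i, W.D x ∈ genWtSeq W S ψ (i + 1) := by
  induction i with
  | zero =>
    intro x hx
    have hx' : x = 0 := hx
    subst hx'
    rw [map_zero]
    exact aux_zero_mem W S ψ 1
  | succ i ih =>
    intro x hx s hs h
    have h1 := ih _ (hx s hs h)
    have h2 : ((h : ℤ) : ℂ) • W.P ((h : ℤ) - 1) s x ∈ genWtSeq W S ψ (i + 1) := by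
      rcases h with _ | h
      · simpa using aux_zero_mem W S ψ (i + 1)
      · apply aux_smul_mem
        have e : W.P (((h + 1 : ℕ) : ℤ) - 1) s x
            = (W.P h s x - ψ s h • x) + ψ s h • x := by
          rw [sub_add_cancel]; congr 3; push_cast; ring
        rw [e]
        exact aux_add_mem _ _ _ _ _ (aux_mono_succ _ _ _ _ (hx s hs h)) _
          (aux_smul_mem _ _ _ _ _ _ hx)
    have e : W.P h s (W.D x) - ψ s h • W.D x
        = W.D (W.P h s x - ψ s h • x) + ((h : ℤ) : ℂ) • W.P ((h : ℤ) - 1) s x := by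
      rw [map_sub, map_smul, W.D_deriv, W.transl_inv]
      module
    rw [e]
    exact aux_add_mem _ _ _ _ _ h1 _ h2

/-- all nonnegative products `x_(n) s` with `s` fixed lie in a finite dimensional space -/
theorem aux_fin (W : VertexAlgebra V) (hfin : W.IsFinite) (s : V) :
    ∃ F : Submodule ℂ V, F.FG ∧ ∀ (x : V) (n : ℕ), W.P n x s ∈ F := by
  obtain ⟨G, hG⟩ := hfin
  choose N hN using fun g => W.field_ax g s
  refine ⟨⨆ g ∈ G, Submodule.span ℂ
    (Set.image (fun n : ℕ => W.P n g s) (Set.Iio (N g))), ?_, ?_⟩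
  · apply Submodule.fg_biSup
    intro g _
    exact Submodule.fg_span ((Set.finite_Iio _).image _)
  · set F := ⨆ g ∈ G, Submodule.span ℂ
      (Set.image (fun n : ℕ => W.P n g s) (Set.Iio (N g))) with hF
    have key : ∀ g ∈ G, ∀ k n : ℕ, W.P n ((W.D ^ k) g) s ∈ F := by
      intro g hg k
      induction k with
      | zero =>
        intro n
        by_cases hn : N g ≤ n
        · simp [hN g n hn]
        · apply Submodule.mem_iSup_of_mem g
          apply Submodule.mem_iSup_of_mem hg
          apply Submodule.subset_span
          exact ⟨n, by simpa using hn, by simp⟩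
      | succ k ih =>
        intro n
        rw [pow_succ', Module.End.mul_apply, W.transl_inv]
        rcases n with _ | n
        · simp
        · apply Submodule.smul_mem
          have := ih n
          convert this using 3
          push_cast; ring
    intro x n
    have hx := hG x
    induction hx using Submodule.span_induction with
    | mem x h =>
      obtain ⟨g, hg, k, rfl⟩ := h
      exact key g hg k n
    | zero => simp
    | add x y _ _ hx hy =>
      rw [map_add, LinearMap.add_apply]; exact F.add_mem hx hy
    | smul c x _ hx =>
      rw [map_smul, LinearMap.smul_apply]; exact F.smul_mem _ hx

theorem aux_comm (W : VertexAlgebra V) (s a v : V) (I : ℕ)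
    (hI : ∀ n : ℕ, I ≤ n → W.P n s a = 0) (m : ℕ) (k : ℤ) :
    W.P m s (W.P k a v) = W.P k a (W.P m s v)
      + ∑ i ∈ Finset.range I, ((m.choose i : ℕ) : ℂ) • W.P (m + k - i) (W.P i s a) v := by
  have h := W.borcherds m k s a v
  rw [finsum_eq_sum_of_support_subset (s := Finset.range I)] at h
  · rw [sub_eq_iff_eq_add'] at h
    rw [h]
    congr 1
    apply Finset.sum_congr rfl
    intro i _
    rw [Ring.choose_natCast]
    simp
  · intro i hi
    by_contra hc
    apply hi
    have : I ≤ i := by simpa using hc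
    simp [hI i this]

theorem aux_skew (W : VertexAlgebra V) (s x : V) (n J : ℕ)
    (hJ : ∀ j : ℕ, J ≤ j → W.P ((n + j : ℕ) : ℤ) s x = 0) :
    ∑ j ∈ Finset.range J, (((-1 : ℂ) ^ j) / (j.factorial : ℂ)) •
      (W.D ^ j) (W.P ((n + j : ℕ) : ℤ) s x) = ((-1 : ℂ) ^ (n + 1)) • W.P n x s := by
  rw [W.skew n x s, finsum_eq_sum_of_support_subset (s := Finset.range J)]
  · rw [Finset.smul_sum]
    apply Finset.sum_congr rfl
    intro j _
    rw [smul_smul]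
    push_cast
    congr 1
    have : ((n : ℤ) + j + 1) = ((n + j + 1 : ℕ) : ℤ) := by push_cast; ring
    rw [this, zpow_natCast, ← mul_div_assoc, ← pow_add]
    congr 1
    rw [show n + 1 + (n + j + 1) = 2 * (n + 1) + j by ring, pow_add, pow_mul]
    simp
  · intro j hj
    by_contra hc
    apply hj
    have : J ≤ j := by simpa using hc
    have h := hJ j this
    push_cast at h
    simp [h]

theorem aux_alt (I i n : ℕ) (h : i < I) :
    ∑ t ∈ Finset.range (I + 1), ((-1 : ℂ) ^ t * (I.choose t : ℂ)) * ((n + t).choose i : ℂ) = 0 := by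
  have key : ∀ (I i : ℕ), i < I →
      (fwdDiff (1 : ℕ))^[I] (fun x : ℕ => (x.choose i : ℤ)) = 0 := by
    intro I
    induction I with
    | zero => intro i hi; omega
    | succ I ih =>
      intro i hi
      rw [Function.iterate_succ_apply]
      rcases i with _ | i
      · have : fwdDiff (1 : ℕ) (fun x : ℕ => (x.choose 0 : ℤ)) = 0 := by
          ext x; simp [fwdDiff]
        rw [this]
        clear ih hi this
        induction I with
        | zero => rfl
        | succ I ih => rw [Function.iterate_succ_apply', ih]; ext x; simp [fwdDiff]
      · have : fwdDiff (1 : ℕ) (fun x : ℕ => (x.choose (i + 1) : ℤ))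
            = fun x : ℕ => (x.choose i : ℤ) := by
          ext x; simp [fwdDiff, Nat.choose_succ_succ]
        rw [this]
        exact ih i (by omega)
  have h1 := congrFun (key I i h) n
  rw [fwdDiff_iter_eq_sum_shift] at h1
  have h2 := congrArg (fun z : ℤ => (-1 : ℂ) ^ I * (z : ℂ)) h1
  simp only [Pi.zero_apply, Int.cast_zero, mul_zero] at h2
  rw [← h2]
  push_cast
  rw [Finset.mul_sum]
  apply Finset.sum_congr rfl
  intro t ht
  have ht' : t ≤ I := by simpa [Nat.lt_succ_iff] using ht
  obtain ⟨r, rfl⟩ := Nat.exists_eq_add_of_le ht'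
  have e : (-1 : ℂ) ^ (t + r) * (-1 : ℂ) ^ r = (-1 : ℂ) ^ t := by
    rw [pow_add, mul_assoc, ← pow_add, ← two_mul, pow_mul]; simp
  simp only [Nat.add_sub_cancel_left, smul_eq_mul, mul_one, Int.cast_mul, Int.cast_pow,
    Int.cast_neg, Int.cast_one, Int.cast_natCast]
  rw [← e]; ring

theorem aux_indep (D : ℕ) : ∀ (M : ℕ) (y : ℕ → V),
    (∀ m : ℕ, M ≤ m → ∑ i ∈ Finset.range D, ((m.choose i : ℕ) : ℂ) • y i = 0) →
    ∀ i < D, y i = 0 := by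
  induction D with
  | zero => intro M y _ i hi; omega
  | succ D ih =>
    intro M y h
    have h1 : ∀ i < D, y (i + 1) = 0 := by
      apply ih M (fun i => y (i + 1))
      intro m hm
      have e1 := h (m + 1) (by omega)
      have e0 := h m hm
      rw [Finset.sum_range_succ'] at e1 e0
      simp only [Nat.choose_succ_succ, Nat.cast_add, add_smul, Finset.sum_add_distrib,
        Nat.choose_zero_right] at e1 e0
      rw [add_assoc, e0, add_zero] at e1
      exact e1
    intro i hi
    rcases i with _ | i
    · have e0 := h M le_rfl
      rw [Finset.sum_range_succ', Finset.sum_eq_zero] at e0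
      · simpa using e0
      · intro i hi
        rw [h1 i (by simpa using hi), smul_zero]
    · exact h1 i (by omega)

/-- key finiteness: the coefficients of `Y(a,z)v` span a finite dimensional space -/
theorem aux_bdd (W : VertexAlgebra V) (hfin : W.IsFinite) (s a v : V) (p : ℕ → ℂ) (d : ℕ)
    (hd : p d ≠ 0) (hd' : ∀ m, d < m → p m = 0)
    (hR : ∀ m : ℕ, ∃ F : Submodule ℂ V, F.FG ∧ ∀ k : ℤ, W.P k a (W.P m s v - p m • v) ∈ F) :
    ∃ F : Submodule ℂ V, F.FG ∧ ∀ k : ℤ, W.P k a v ∈ F := by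
  obtain ⟨F, hF, hFm⟩ := aux_fin W hfin s
  choose R hRfg hRm using hR
  obtain ⟨I, hI⟩ := W.field_ax s a
  obtain ⟨M0, hM0⟩ := W.field_ax s v
  set M := max M0 (d + 1) with hM
  have hv0 : ∀ m, M ≤ m → W.P m s v - p m • v = 0 := by
    intro m hm
    rw [hM0 m (by omega), hd' m (by omega)]; simp
  set FR : Submodule ℂ V :=
    ⨆ q : Fin M × Fin M, Submodule.map (W.D ^ (q.1 : ℕ)) (R q.2) with hFR
  have hFRm : ∀ (j m : ℕ) (k : ℤ), j ≤ m →
      (W.D ^ j) (W.P k a (W.P m s v - p m • v)) ∈ FR := by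
    intro j m k hjm
    by_cases hm : M ≤ m
    · rw [hv0 m hm]; simp
    · exact Submodule.mem_iSup_of_mem (⟨⟨j, by omega⟩, ⟨m, by omega⟩⟩ : Fin M × Fin M)
        (Submodule.mem_map_of_mem (hRm m k))
  refine ⟨F ⊔ FR, hF.sup (Submodule.fg_iSup _ fun q => (hRfg _).map _), ?_⟩
  intro k
  choose N hN using fun t : ℕ => W.field_ax s (W.P (k - t) a v)
  set J := (Finset.range (I + 1)).sup N + 1 with hJdef
  have hJ : ∀ t ∈ Finset.range (I + 1), ∀ j : ℕ, J ≤ j →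
      W.P ((d + t + j : ℕ) : ℤ) s (W.P (k - t) a v) = 0 := by
    intro t ht j hj
    apply hN
    have := Finset.le_sup (f := N) ht
    omega
  set w : ℕ → ℂ := fun t => (-1 : ℂ) ^ t * (I.choose t : ℂ) with hw
  set c : ℕ → ℂ := fun j => ((-1 : ℂ) ^ j) / (j.factorial : ℂ) with hc
  have hmem : ∑ t ∈ Finset.range (I + 1), w t • ∑ j ∈ Finset.range J, c j •
      (W.D ^ j) (W.P ((d + t + j : ℕ) : ℤ) s (W.P (k - t) a v)) ∈ F := by
    apply Submodule.sum_mem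
    intro t ht
    rw [aux_skew W s _ (d + t) J (hJ t ht)]
    exact F.smul_mem _ (F.smul_mem _ (hFm _ _))
  have hterm : ∀ t j : ℕ, W.P ((d + t + j : ℕ) : ℤ) s (W.P (k - t) a v)
      = p (d + t + j) • W.P (k - t) a v
        + W.P (k - t) a (W.P ((d + t + j : ℕ) : ℤ) s v - p (d + t + j) • v)
        + ∑ i ∈ Finset.range I, ((d + t + j).choose i : ℂ) •
            W.P (d + j + k - i) (W.P i s a) v := by
    intro t j
    rw [aux_comm W s a v I hI, map_sub, map_smul]
    have e : ∀ i : ℕ, ((d + t + j : ℕ) : ℤ) + (k - t) - i = d + j + k - i := by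
      intro i; push_cast; ring
    simp only [e]
    abel
  have hsum : ∑ t ∈ Finset.range (I + 1), w t • ∑ j ∈ Finset.range J, c j •
      (W.D ^ j) (W.P ((d + t + j : ℕ) : ℤ) s (W.P (k - t) a v))
      = (∑ t ∈ Finset.range (I + 1), w t • ∑ j ∈ Finset.range J, c j •
          (W.D ^ j) (p (d + t + j) • W.P (k - t) a v))
        + (∑ t ∈ Finset.range (I + 1), w t • ∑ j ∈ Finset.range J, c j •
          (W.D ^ j) (W.P (k - t) a (W.P ((d + t + j : ℕ) : ℤ) s v - p (d + t + j) • v)))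
        + (∑ t ∈ Finset.range (I + 1), w t • ∑ j ∈ Finset.range J, c j •
          (W.D ^ j) (∑ i ∈ Finset.range I, ((d + t + j).choose i : ℂ) •
            W.P (d + j + k - i) (W.P i s a) v)) := by
    simp only [hterm, map_add, smul_add, Finset.sum_add_distrib]
  have h3 : (∑ t ∈ Finset.range (I + 1), w t • ∑ j ∈ Finset.range J, c j •
          (W.D ^ j) (∑ i ∈ Finset.range I, ((d + t + j).choose i : ℂ) •
            W.P (d + j + k - i) (W.P i s a) v)) = 0 := by
    simp only [Finset.smul_sum, map_sum, map_smul]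
    rw [Finset.sum_comm]
    apply Finset.sum_eq_zero
    intro j _
    rw [Finset.sum_comm]
    apply Finset.sum_eq_zero
    intro i hi
    have := aux_alt I i (d + j) (by simpa using hi)
    have e : ∀ t : ℕ, d + t + j = d + j + t := fun t => by ring
    simp only [e, smul_smul]
    rw [← Finset.sum_smul]
    have e2 : ∑ t ∈ Finset.range (I + 1), w t * (c j * ((d + j + t).choose i : ℂ)) = 0 := by
      calc _ = c j * ∑ t ∈ Finset.range (I + 1), w t * ((d + j + t).choose i : ℂ) := by
            rw [Finset.mul_sum]; apply Finset.sum_congr rfl; intros; ring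
        _ = 0 := by rw [this, mul_zero]
    rw [e2, zero_smul]
  have h2 : (∑ t ∈ Finset.range (I + 1), w t • ∑ j ∈ Finset.range J, c j •
          (W.D ^ j) (W.P (k - t) a (W.P ((d + t + j : ℕ) : ℤ) s v - p (d + t + j) • v)))
          ∈ FR := by
    apply Submodule.sum_mem
    intro t _
    apply Submodule.smul_mem
    apply Submodule.sum_mem
    intro j _
    apply Submodule.smul_mem
    exact hFRm _ _ _ (by omega)
  have h1 : (∑ t ∈ Finset.range (I + 1), w t • ∑ j ∈ Finset.range J, c j •
          (W.D ^ j) (p (d + t + j) • W.P (k - t) a v)) = p d • W.P k a v := by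
    rw [Finset.sum_eq_single 0, Finset.sum_eq_single 0]
    · simp [hw, hc]
    · intro j _ hj
      rw [hd' _ (by omega)]; simp
    · intro h; exact absurd (Finset.mem_range.2 (by omega)) h
    · intro t _ ht
      rw [Finset.sum_eq_zero, smul_zero]
      intro j _
      rw [hd' _ (by omega)]; simp
    · intro h; exact absurd (Finset.mem_range.2 (by omega)) h
  rw [h3, h1, add_zero] at hsum
  have h4 : p d • W.P k a v ∈ F ⊔ FR := by
    rw [eq_sub_of_add_eq hsum.symm]
    exact Submodule.sub_mem _ (Submodule.mem_sup_left hmem) (Submodule.mem_sup_right h2)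
  rwa [Submodule.smul_mem_iff _ hd] at h4

theorem aux_main (W : VertexAlgebra V) (hfin : W.IsFinite)
    (S : Submodule ℂ V) (ψ : V → ℕ → ℂ) (hψ : W.IsWeight S ψ)
    (hψne : ∃ s ∈ S, ∃ h : ℕ, ψ s h ≠ 0) (i : ℕ) :
    ∀ v ∈ genWtSeq W S ψ i, ∀ a : V,
      (∃ F : Submodule ℂ V, F.FG ∧ ∀ k : ℤ, W.P k a v ∈ F) ∧
      (∀ k : ℤ, W.P k a v ∈ genWtSeq W S ψ i) ∧
      (∀ s ∈ S, ∀ (j : ℕ) (k : ℤ), W.P k (W.P j s a) v = 0) := by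
  induction i with
  | zero =>
    intro v hv a
    have hv' : v = 0 := hv
    subst hv'
    exact ⟨⟨⊥, Submodule.fg_bot, by simp⟩, fun k => map_zero (W.P k a), by simp⟩
  | succ i ih =>
    intro v hv a
    obtain ⟨v0, hv0, hw⟩ := hψ
    have hb : ∃ F : Submodule ℂ V, F.FG ∧ ∀ k : ℤ, W.P k a v ∈ F := by
      obtain ⟨s, hs, h, hh⟩ := hψne
      obtain ⟨N, hN⟩ := W.field_ax s v0
      have hz : ∀ m, N ≤ m → ψ s m = 0 := by
        intro m hm
        have := hw s hs m
        rw [hN m hm] at this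
        exact (smul_eq_zero.1 this.symm).resolve_right hv0
      have hle : h ≤ N := by
        by_contra hc
        exact hh (hz h (by omega))
      classical
      refine aux_bdd W hfin s a v (ψ s) (Nat.findGreatest (fun m => ψ s m ≠ 0) N)
        (Nat.findGreatest_spec (P := fun m => ψ s m ≠ 0) hle hh) ?_ ?_
      · intro m hm
        by_cases hmN : N ≤ m
        · exact hz m hmN
        · have := Nat.findGreatest_is_greatest hm (by omega)
          simpa using this
      · intro m
        exact (ih _ (hv s hs m) a).1
    have hk : ∀ s ∈ S, ∀ (j : ℕ) (k : ℤ), W.P k (W.P j s a) v = 0 := by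
      intro s hs j k
      obtain ⟨F, ⟨B, rfl⟩, hF⟩ := hb
      obtain ⟨I, hI⟩ := W.field_ax s a
      obtain ⟨N, hN⟩ := W.field_ax s v
      choose L hL using fun b => W.field_ax s b
      have hz : ∀ m : ℕ, B.sup L ≤ m → ∀ x ∈ Submodule.span ℂ (B : Set V), W.P m s x = 0 := by
        intro m hm x hx
        induction hx using Submodule.span_induction with
        | mem x h => exact hL x m ((Finset.le_sup (f := L) h).trans hm)
        | zero => simp
        | add x y _ _ hx hy => rw [map_add, hx, hy, add_zero]
        | smul c x _ hx => rw [map_smul, hx, smul_zero]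
      by_cases hj : I ≤ j
      · rw [hI j hj]; simp
      · have := aux_indep I (max (B.sup L) N) (fun i => W.P (k + j - i) (W.P i s a) v) ?_ j
          (by omega)
        · simpa using this
        · intro m hm
          have e := aux_comm W s a v I hI m (k + j - m)
          rw [hz m (by omega) _ (hF _), hN m (by omega), map_zero, zero_add] at e
          simpa using e.symm
    refine ⟨hb, ?_, hk⟩
    intro k s hs m
    obtain ⟨I, hI⟩ := W.field_ax s a
    rw [aux_comm W s a v I hI, Finset.sum_eq_zero, add_zero]
    · rw [← map_smul, ← map_sub]
      exact (ih _ (hv s hs m) a).2.1 k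
    · intro j _
      rw [hk s hs, smul_zero]

theorem aux_prod (W : VertexAlgebra V) (hfin : W.IsFinite)
    (S : Submodule ℂ V) (ψ : V → ℕ → ℂ) (hψ : W.IsWeight S ψ)
    (hψne : ∃ s ∈ S, ∃ h : ℕ, ψ s h ≠ 0) (i : ℕ) :
    ∀ u ∈ genWtSeq W S ψ i, ∀ v ∈ genWt W S ψ, ∀ n : ℤ, W.P n u v = 0 := by
  induction i with
  | zero =>
    intro u hu v _ n
    have hu' : u = 0 := hu
    subst hu'
    simp
  | succ i ih =>
    intro u hu v hv n
    obtain ⟨j, hj⟩ := hv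
    obtain ⟨s, hs, h, hh⟩ := hψne
    have h1 := (aux_main W hfin S ψ hψ ⟨s, hs, h, hh⟩ j v hj u).2.2 s hs h n
    have h2 := ih _ (hu s hs h) v ⟨j, hj⟩ n
    rw [map_sub, LinearMap.sub_apply, h1, map_smul, LinearMap.smul_apply, zero_sub,
      neg_eq_zero] at h2
    exact (smul_eq_zero.1 h2).resolve_left hh

end aux

end VertexAlgebra

open VertexAlgebra in
/-- in a finite vertex algebra, the generalized weight space of a non-zero
weight `ψ` for the adjoint action of a Lie conformal subalgebra `S` is an abelian vertex
ideal: it is a `ℂ[T]`-submodule stable under all products with `V`, on which all products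
vanish. -/
theorem nonzero_generalized_weight_space_is_abelian_ideal
    {V : Type*} [AddCommGroup V] [Module ℂ V]
    (W : VertexAlgebra V) (hfin : W.IsFinite)
    (S : Submodule ℂ V) (hS : W.IsConfSubalgebra S)
    (ψ : V → ℕ → ℂ) (hψ : W.IsWeight S ψ)
    (hψne : ∃ s ∈ S, ∃ h : ℕ, ψ s h ≠ 0) :
    (∀ x ∈ W.genWt S ψ, ∀ y ∈ W.genWt S ψ, x + y ∈ W.genWt S ψ) ∧
    (∀ c : ℂ, ∀ x ∈ W.genWt S ψ, c • x ∈ W.genWt S ψ) ∧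
    (∀ x ∈ W.genWt S ψ, W.D x ∈ W.genWt S ψ) ∧
    (∀ a : V, ∀ x ∈ W.genWt S ψ, ∀ n : ℤ, W.P n a x ∈ W.genWt S ψ) ∧
    (∀ x ∈ W.genWt S ψ, ∀ y ∈ W.genWt S ψ, ∀ n : ℤ, W.P n x y = 0) := by
  refine ⟨?_, ?_, ?_, ?_, ?_⟩
  · rintro x ⟨i, hi⟩ y ⟨j, hj⟩
    exact ⟨max i j, aux_add_mem W S ψ _ _ (aux_mono W S ψ (le_max_left i j) hi) _
      (aux_mono W S ψ (le_max_right i j) hj)⟩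
  · rintro c x ⟨i, hi⟩
    exact ⟨i, aux_smul_mem W S ψ i c x hi⟩
  · rintro x ⟨i, hi⟩
    exact ⟨i + 1, aux_D_mem W S ψ i x hi⟩
  · rintro a x ⟨i, hi⟩ n
    exact ⟨i, (aux_main W hfin S ψ hψ hψne i x hi a).2.1 n⟩
  · rintro x ⟨i, hi⟩ y hy n
    exact aux_prod W hfin S ψ hψ hψne i x hi y hy n
end
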